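/- arXiv:1911.10481 — 4 statements merged into one kernel-verified Lean document; each statement's English description precedes it below -/
import Mathlib

section
/- Let β > 0 and F(k) = (2/3)(2π)⁻³ χ(|k|)² |k| for k ∈ ℝ³. Then lim_{ε→0⁺} ∫_{ℝ³×(0,∞)} F(k) cos(t(|k| − 2β)) e^{−εt} dk dt = π ∫_{|k|=2β} F dμ = (8/(3π)) β³ χ(2β)², where μ is the surface measure on the sphere |k| = 2β. -/
noncomputable section
open MeasureTheory

/-- `F(k) = (2/3)(2π)⁻³ χ(|k|)² |k|`. -/
def F (χ : SchwartzMap ℝ ℝ) (k : EuclideanSpace ℝ (Fin 3)) : ℝ :=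
  (2 / 3) * ((2 * Real.pi) ^ 3)⁻¹ * (χ ‖k‖) ^ 2 * ‖k‖

/-- The time integral. -/
lemma time_integral (a ε : ℝ) (hε : 0 < ε) :
    ∫ t in Set.Ioi (0 : ℝ), Real.cos (t * a) * Real.exp (-ε * t) = ε / (ε ^ 2 + a ^ 2) := by
  have hre : ((-ε : ℂ) + a * Complex.I).re < 0 := by simp [hε]
  have h := integral_exp_mul_complex_Ioi hre 0
  have hi := integrableOn_exp_mul_complex_Ioi hre 0
  have h2 : ∫ t in Set.Ioi (0 : ℝ), RCLike.re (Complex.exp (((-ε : ℂ) + a * Complex.I) * t))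
      = RCLike.re (∫ t in Set.Ioi (0 : ℝ), Complex.exp (((-ε : ℂ) + a * Complex.I) * t)) :=
    integral_re hi
  rw [h] at h2
  have h3 : ∀ t : ℝ, RCLike.re (Complex.exp (((-ε : ℂ) + a * Complex.I) * t))
      = Real.cos (t * a) * Real.exp (-ε * t) := by
    intro t
    simp [Complex.exp_re, mul_comm]
  simp only [h3] at h2
  rw [h2]
  have hne : ε ^ 2 + a ^ 2 ≠ 0 := by positivity
  simp [Complex.div_re, Complex.normSq_apply]
  field_simp

lemma chi_bound (χ : SchwartzMap ℝ ℝ) (k : ℕ) : ∃ C : ℝ, 0 < C ∧ ∀ x, |x| ^ k * |χ x| ≤ C := by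
  obtain ⟨C, hC, h⟩ := χ.decay k 0
  exact ⟨C, hC, fun x => by simpa using h x⟩

lemma F_integrable (χ : SchwartzMap ℝ ℝ) : Integrable (F χ) := by
  have : F χ = fun k : EuclideanSpace ℝ (Fin 3) =>
      (fun r : ℝ => (2 / 3) * ((2 * Real.pi) ^ 3)⁻¹ * (χ r) ^ 2 * r) ‖k‖ := rfl
  rw [this]
  refine (integrable_fun_norm_addHaar (volume : Measure (EuclideanSpace ℝ (Fin 3)))
    (f := fun r : ℝ => (2 / 3) * ((2 * Real.pi) ^ 3)⁻¹ * (χ r) ^ 2 * r)).2 ?_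
  simp only [finrank_euclideanSpace, Fintype.card_fin]
  obtain ⟨C, hC, hb⟩ := chi_bound χ 0
  have h1 := (χ.integrable_pow_mul volume 3).mul_const (C * |(2 / 3) * ((2 * Real.pi) ^ 3)⁻¹|)
  refine Integrable.integrableOn (h1.mono' ?_ ?_)
  · have := χ.continuous
    exact Continuous.aestronglyMeasurable (by fun_prop)
  · refine Filter.Eventually.of_forall fun r => ?_
    have := hb r
    simp only [pow_zero, one_mul] at this
    simp only [smul_eq_mul, norm_mul, norm_pow, Real.norm_eq_abs]
    have e : |r| ^ (3 - 1) * (|2 / 3| * |((2 * Real.pi) ^ 3)⁻¹| * |χ r| ^ 2 * |r|)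
      = |r| ^ 3 * |χ r| * (|χ r| * (|2 / 3 * ((2 * Real.pi) ^ 3)⁻¹|)) := by
      rw [abs_mul, show 3 - 1 = 2 from rfl]; ring
    rw [abs_mul] at *
    rw [e]
    gcongr

/-- Spatial integral after time integration. -/
lemma eq_one (χ : SchwartzMap ℝ ℝ) (β ε : ℝ) (hε : 0 < ε) :
    (∫ p : EuclideanSpace ℝ (Fin 3) × ℝ in Set.univ ×ˢ Set.Ioi (0 : ℝ),
          F χ p.1 * Real.cos (p.2 * (‖p.1‖ - 2 * β)) * Real.exp (-ε * p.2))
    = ∫ k, F χ k * (ε / (ε ^ 2 + (‖k‖ - 2 * β) ^ 2)) := by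
  have hexp : IntegrableOn (fun t : ℝ => Real.exp (-ε * t)) (Set.Ioi 0) :=
    integrableOn_exp_mul_Ioi (by linarith) 0
  have hprod := (F_integrable χ).mul_prod hexp
  have hcχ := χ.continuous
  have hint : Integrable (fun p : EuclideanSpace ℝ (Fin 3) × ℝ =>
      F χ p.1 * Real.cos (p.2 * (‖p.1‖ - 2 * β)) * Real.exp (-ε * p.2))
      ((volume : Measure (EuclideanSpace ℝ (Fin 3))).prod (volume.restrict (Set.Ioi 0))) := by
    refine hprod.mono ?_ ?_
    · unfold F
      exact Continuous.aestronglyMeasurable (by fun_prop)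
    · refine Filter.Eventually.of_forall fun p => ?_
      simp only [norm_mul]
      have := Real.abs_cos_le_one (p.2 * (‖p.1‖ - 2 * β))
      rw [← Real.norm_eq_abs] at this
      gcongr
      exact mul_le_of_le_one_right (norm_nonneg _) this
  rw [Measure.volume_eq_prod, ← Measure.prod_restrict, Measure.restrict_univ, integral_prod _ hint]
  refine integral_congr_ae (Filter.Eventually.of_forall fun k => ?_)
  simp only [mul_assoc]
  rw [integral_const_mul, time_integral _ _ hε]

/-- Radial profile. -/
def G (χ : SchwartzMap ℝ ℝ) (r : ℝ) : ℝ := (max r 0) ^ 3 * (χ r) ^ 2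

lemma eq_two (χ : SchwartzMap ℝ ℝ) (β ε : ℝ) (hε : 0 < ε) :
    (∫ k, F χ k * (ε / (ε ^ 2 + (‖k‖ - 2 * β) ^ 2)))
    = (1 / (3 * Real.pi ^ 2)) * ∫ s : ℝ, G χ (ε * s + 2 * β) * (1 + s ^ 2)⁻¹ := by
  have h := integral_fun_norm_addHaar (volume : Measure (EuclideanSpace ℝ (Fin 3)))
    (fun r : ℝ => (2 / 3) * ((2 * Real.pi) ^ 3)⁻¹ * (χ r) ^ 2 * r
      * (ε / (ε ^ 2 + (r - 2 * β) ^ 2)))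
  have hvol : (volume : Measure (EuclideanSpace ℝ (Fin 3))).real (Metric.ball 0 1)
      = Real.pi * 4 / 3 := by
    rw [Measure.real, EuclideanSpace.volume_ball_fin_three]
    simp
    positivity
  simp only [F]
  rw [h, hvol]
  have h2 : (∫ s : ℝ, G χ (ε * s + 2 * β) * (1 + s ^ 2)⁻¹)
      = ∫ r : ℝ, G χ r * (ε / (ε ^ 2 + (r - 2 * β) ^ 2)) := by
    rw [← integral_add_right_eq_self (fun r => G χ r * (ε / (ε ^ 2 + (r - 2 * β) ^ 2))) (2 * β)]
    have := Measure.integral_comp_mul_left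
      (fun r => G χ (r + 2 * β) * (ε / (ε ^ 2 + (r + 2 * β - 2 * β) ^ 2))) ε
    rw [abs_of_pos (by positivity), smul_eq_mul, eq_inv_mul_iff_mul_eq₀ hε.ne'] at this
    rw [← this, ← integral_const_mul]
    congr 1
    ext s
    have : 1 + s ^ 2 ≠ 0 := by positivity
    have : ε ^ 2 + (ε * s) ^ 2 ≠ 0 := by positivity
    rw [add_sub_cancel_right]
    field_simp
  have h3 : (∫ r : ℝ, G χ r * (ε / (ε ^ 2 + (r - 2 * β) ^ 2)))
      = ∫ r in Set.Ioi (0 : ℝ), G χ r * (ε / (ε ^ 2 + (r - 2 * β) ^ 2)) := by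
    symm
    apply setIntegral_eq_integral_of_forall_compl_eq_zero
    intro r hr
    have : r ≤ 0 := by simpa using hr
    simp [G, this]
  rw [h2, h3]
  simp only [finrank_euclideanSpace, Fintype.card_fin, smul_eq_mul, nsmul_eq_mul]
  simp only [← integral_const_mul]
  refine setIntegral_congr_fun measurableSet_Ioi fun r hr => ?_
  have hr' : max r 0 = r := max_eq_left (le_of_lt hr)
  have := Real.pi_pos
  have : ε ^ 2 + (r - 2 * β) ^ 2 ≠ 0 := by positivity
  simp only [G, hr']
  push_cast
  field_simp
  ring

lemma G_bound (χ : SchwartzMap ℝ ℝ) : ∃ C : ℝ, ∀ r, |G χ r| ≤ C := by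
  obtain ⟨C, hC, h⟩ := chi_bound χ 0
  obtain ⟨D, hD, h'⟩ := chi_bound χ 3
  refine ⟨D * C, fun r => ?_⟩
  have h1 := h r
  simp only [pow_zero, one_mul] at h1
  have e : |max r 0| ≤ |r| := by
    rw [abs_of_nonneg (le_max_right _ _)]
    exact max_le (le_abs_self r) (abs_nonneg r)
  calc |G χ r| = (|max r 0| ^ 3 * |χ r|) * |χ r| := by
        rw [G, abs_mul, abs_pow, abs_pow]; ring
    _ ≤ (|r| ^ 3 * |χ r|) * |χ r| := by gcongr
    _ ≤ D * C := by gcongr; exact h' r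

lemma G_continuous (χ : SchwartzMap ℝ ℝ) : Continuous (G χ) := by
  have := χ.continuous
  unfold G
  fun_prop

lemma lim_G (χ : SchwartzMap ℝ ℝ) (β : ℝ) :
    Filter.Tendsto (fun ε : ℝ => ∫ s : ℝ, G χ (ε * s + 2 * β) * (1 + s ^ 2)⁻¹)
      (nhdsWithin 0 (Set.Ioi 0)) (nhds (G χ (2 * β) * Real.pi)) := by
  obtain ⟨C, hC⟩ := G_bound χ
  have hG := G_continuous χ
  have e : G χ (2 * β) * Real.pi = ∫ s : ℝ, G χ (2 * β) * (1 + s ^ 2)⁻¹ := by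
    rw [integral_const_mul, integral_univ_inv_one_add_sq]
  rw [e]
  have hc : ∀ ε : ℝ, AEStronglyMeasurable (fun s : ℝ => G χ (ε * s + 2 * β) * (1 + s ^ 2)⁻¹) := by
    intro ε
    refine AEStronglyMeasurable.mul (Continuous.aestronglyMeasurable (by fun_prop)) ?_
    exact integrable_inv_one_add_sq.aestronglyMeasurable
  refine tendsto_integral_filter_of_dominated_convergence (fun s => C * (1 + s ^ 2)⁻¹)
    (Filter.Eventually.of_forall hc) ?_ (integrable_inv_one_add_sq.const_mul C) ?_
  · refine Filter.Eventually.of_forall fun ε => Filter.Eventually.of_forall fun s => ?_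
    have h0 : (0 : ℝ) ≤ (1 + s ^ 2)⁻¹ := by positivity
    rw [Real.norm_eq_abs, abs_mul, abs_of_nonneg h0]
    exact mul_le_mul_of_nonneg_right (hC _) h0
  · refine Filter.Eventually.of_forall fun s => ?_
    have : Continuous fun ε : ℝ => G χ (ε * s + 2 * β) * (1 + s ^ 2)⁻¹ := by fun_prop
    have h := (this.tendsto 0).mono_left (nhdsWithin_le_nhds (s := Set.Ioi 0))
    simpa using h

theorem stmt4 (χ : SchwartzMap ℝ ℝ) (β : ℝ) (hβ : 0 < β) :
    Filter.Tendsto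
      (fun ε : ℝ =>
        ∫ p : EuclideanSpace ℝ (Fin 3) × ℝ in Set.univ ×ˢ Set.Ioi (0 : ℝ),
          F χ p.1 * Real.cos (p.2 * (‖p.1‖ - 2 * β)) * Real.exp (-ε * p.2))
      (nhdsWithin 0 (Set.Ioi 0))
      (nhds ((8 / (3 * Real.pi)) * β ^ 3 * (χ (2 * β)) ^ 2)) := by
  have h := (lim_G χ β).const_mul (1 / (3 * Real.pi ^ 2))
  have e : 1 / (3 * Real.pi ^ 2) * (G χ (2 * β) * Real.pi)
      = (8 / (3 * Real.pi)) * β ^ 3 * (χ (2 * β)) ^ 2 := by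
    have := Real.pi_pos
    rw [G, max_eq_left (by positivity)]
    field_simp
    ring
  rw [e] at h
  refine h.congr' ?_
  filter_upwards [self_mem_nhdsWithin] with ε hε
  rw [eq_one χ β ε hε, eq_two χ β ε hε]
end
end

section
/- Let β > 0. Then Re d₁ = (8/(3π)) β³ χ(2β)². In particular Re d₁ ≥ 0, and if χ(2β) ≠ 0 (the Fermi Golden Rule hypothesis) then Re d₁ > 0. -/
noncomputable section
open MeasureTheory Complex

def u (χ : SchwartzMap ℝ ℝ) (t : ℝ) : ℂ :=
  ((2 / (3 * (2 * Real.pi) ^ 3) : ℝ) : ℂ) *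
    ∫ k : EuclideanSpace ℝ (Fin 3), (((χ ‖k‖) ^ 2 * ‖k‖ : ℝ) : ℂ) * Complex.exp (-(t * ‖k‖) * Complex.I)

/-- `d_m = ∫₀^∞ u(t) e^{2imβt} dt`. -/
def dcoef (χ : SchwartzMap ℝ ℝ) (β : ℝ) (m : ℤ) : ℂ :=
  ∫ t in Set.Ioi (0 : ℝ), u χ t * Complex.exp (2 * m * β * t * Complex.I)

open scoped FourierTransform

lemma aux_pos_deriv (n : ℕ) (r : ℝ) :
    HasDerivAt (fun r : ℝ => (max r 0) ^ (n + 2)) ((n + 2) * (max r 0) ^ (n + 1)) r := by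
  rcases lt_trichotomy r 0 with h | h | h
  · have : (fun r : ℝ => (max r 0) ^ (n + 2)) =ᶠ[nhds r] fun _ => 0 := by
      filter_upwards [gt_mem_nhds h] with x hx
      simp [max_eq_right hx.le]
    have h2 := (hasDerivAt_const r (0 : ℝ)).congr_of_eventuallyEq this
    simpa [max_eq_right h.le] using h2
  · subst h
    rw [hasDerivAt_iff_tendsto_slope]
    have h1 : Filter.Tendsto (fun x : ℝ => (max x 0) ^ (n + 1)) (nhdsWithin 0 {0}ᶜ)
        (nhds (((n : ℝ) + 2) * (max (0 : ℝ) 0) ^ (n + 1))) := by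
      have : Continuous (fun x : ℝ => (max x 0) ^ (n + 1)) := by fun_prop
      have h3 := (this.tendsto 0).mono_left (nhdsWithin_le_nhds (s := {0}ᶜ))
      simpa using h3
    refine h1.congr' ?_
    filter_upwards [self_mem_nhdsWithin] with x hx
    have hx0 : x ≠ 0 := hx
    simp only [slope, vsub_eq_sub, smul_eq_mul, sub_zero, max_self]
    rcases le_total x 0 with h | h
    · simp [max_eq_right h]
    · rw [max_eq_left h]
      field_simp
      simp [pow_succ]
  · have : (fun r : ℝ => (max r 0) ^ (n + 2)) =ᶠ[nhds r] fun r => r ^ (n + 2) := by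
      filter_upwards [lt_mem_nhds h] with x hx
      simp [max_eq_left hx.le]
    have h2 := (hasDerivAt_pow (n + 2) r).congr_of_eventuallyEq this
    simpa [max_eq_left h.le] using h2

def auxG (n : ℕ) (φ : SchwartzMap ℝ ℝ) (r : ℝ) : ℂ := (((max r 0) ^ n * φ r : ℝ) : ℂ)

lemma auxG_cont (n : ℕ) (φ : SchwartzMap ℝ ℝ) : Continuous (auxG n φ) := by
  unfold auxG
  have := φ.continuous
  fun_prop

lemma auxG_int (n : ℕ) (φ : SchwartzMap ℝ ℝ) : Integrable (auxG n φ) := by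
  refine (φ.integrable_pow_mul volume n).mono' (auxG_cont n φ).aestronglyMeasurable ?_
  refine Filter.Eventually.of_forall fun r => ?_
  simp only [auxG, Complex.norm_real, norm_mul, norm_pow]
  gcongr
  rw [Real.norm_eq_abs, Real.norm_eq_abs]
  rcases le_total r 0 with h | h
  · simp [max_eq_right h]
  · simp [max_eq_left h]

lemma auxG_deriv (n : ℕ) (φ : SchwartzMap ℝ ℝ) (r : ℝ) :
    HasDerivAt (auxG (n + 2) φ)
      (((n : ℂ) + 2) * auxG (n + 1) φ r + auxG (n + 2) (SchwartzMap.derivCLM ℝ ℝ φ) r) r := by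
  have h := ((aux_pos_deriv n r).mul (φ.hasDerivAt r)).ofReal_comp
  convert! h using 1
  simp [auxG, SchwartzMap.derivCLM_apply]
  ring

lemma aux_bound (f : ℝ → ℂ) (w : ℝ) : ‖𝓕 f w‖ ≤ ∫ x, ‖f x‖ := by
  exact VectorFourier.norm_fourierIntegral_le_integral_norm Real.fourierChar _ (innerₗ ℝ) f w

lemma auxG_fourier_int (φ : SchwartzMap ℝ ℝ) : Integrable (𝓕 (auxG 3 φ)) := by
  set φ' := SchwartzMap.derivCLM ℝ ℝ φ
  have d1 : deriv (auxG 3 φ) = fun r => 3 * auxG 2 φ r + auxG 3 φ' r := by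
    ext r
    rw [(auxG_deriv 1 φ r).deriv]
    norm_num [φ']
  have h1 : ∀ r, HasDerivAt (fun r => 3 * auxG 2 φ r + auxG 3 φ' r)
      (3 * (2 * auxG 1 φ r + auxG 2 φ' r) + (3 * auxG 2 φ' r
        + auxG 3 (SchwartzMap.derivCLM ℝ ℝ φ') r)) r := by
    intro r
    have a := (auxG_deriv 0 φ r).const_mul 3
    have b := auxG_deriv 1 φ' r
    convert! a.add b using 1
    norm_num [φ']
  have d2 : deriv (deriv (auxG 3 φ)) = fun r => (3 * (2 * auxG 1 φ r + auxG 2 φ' r)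
      + (3 * auxG 2 φ' r + auxG 3 (SchwartzMap.derivCLM ℝ ℝ φ') r)) := by
    ext r
    rw [d1, (h1 r).deriv]
  have i1 : Integrable (deriv (auxG 3 φ)) := by
    rw [d1]
    exact ((auxG_int 2 φ).const_mul 3).add (auxG_int 3 φ')
  have i2 : Integrable (deriv (deriv (auxG 3 φ))) := by
    rw [d2]
    exact ((((auxG_int 1 φ).const_mul 2).add (auxG_int 2 φ')).const_mul 3).add
      (((auxG_int 2 φ').const_mul 3).add (auxG_int 3 _))
  have diff0 : Differentiable ℝ (auxG 3 φ) := fun r => (auxG_deriv 1 φ r).differentiableAt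
  have diff1 : Differentiable ℝ (deriv (auxG 3 φ)) := by
    rw [d1]
    exact fun r => (h1 r).differentiableAt
  have f1 := Real.fourier_deriv (auxG_int 3 φ) diff0 i1
  have f2 := Real.fourier_deriv i1 diff1 i2
  set A := ∫ x, ‖auxG 3 φ x‖
  set B := ∫ x, ‖deriv (deriv (auxG 3 φ)) x‖
  have hB : 0 ≤ B := integral_nonneg fun _ => norm_nonneg _
  have hcont : Continuous (𝓕 (auxG 3 φ)) :=
    VectorFourier.fourierIntegral_continuous Real.continuous_fourierChar
      (L := innerₗ ℝ) (by exact continuous_inner) (auxG_int 3 φ)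
  refine (integrable_inv_one_add_sq.const_mul (A + B)).mono' hcont.aestronglyMeasurable ?_
  refine Filter.Eventually.of_forall fun w => ?_
  have b0 := aux_bound (auxG 3 φ) w
  have b2 := aux_bound (deriv (deriv (auxG 3 φ))) w
  rw [f2, f1] at b2
  simp only [norm_smul, norm_mul, Complex.norm_real, Complex.norm_I, Complex.norm_ofNat,
    Real.norm_eq_abs, abs_of_pos Real.pi_pos, mul_one] at b2
  rw [← div_eq_mul_inv, le_div_iff₀ (by positivity)]
  set N := ‖𝓕 (auxG 3 φ) w‖
  have hN : 0 ≤ N := norm_nonneg _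
  have e : 2 * Real.pi * |w| * (2 * Real.pi * |w| * N) = (2 * Real.pi) ^ 2 * (N * w ^ 2) := by
    rw [← sq_abs w]; ring
  rw [e] at b2
  have p : 1 ≤ (2 * Real.pi) ^ 2 := by nlinarith [Real.pi_gt_three]
  have q : N * w ^ 2 ≤ (2 * Real.pi) ^ 2 * (N * w ^ 2) :=
    le_mul_of_one_le_left (by positivity) p
  change N ≤ A at b0
  change _ ≤ B at b2
  linarith

def auxSq (χ : SchwartzMap ℝ ℝ) : SchwartzMap ℝ ℝ :=
  SchwartzMap.pairing (ContinuousLinearMap.mul ℝ ℝ) χ χ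

lemma auxSq_apply (χ : SchwartzMap ℝ ℝ) (r : ℝ) : auxSq χ r = χ r ^ 2 := by
  simp [auxSq, sq]

lemma u_eq (χ : SchwartzMap ℝ ℝ) (t : ℝ) :
    u χ t = ((1 / (3 * Real.pi ^ 2) : ℝ) : ℂ) * 𝓕 (auxG 3 (auxSq χ)) ((2 * Real.pi)⁻¹ * t) := by
  have h := integral_fun_norm_addHaar (volume : Measure (EuclideanSpace ℝ (Fin 3)))
    (fun r : ℝ => (((χ r) ^ 2 * r : ℝ) : ℂ) * Complex.exp (-(t * r) * Complex.I))
  have hv : (volume : Measure (EuclideanSpace ℝ (Fin 3))).real (Metric.ball 0 1)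
      = Real.pi * 4 / 3 := by
    rw [Measure.real, EuclideanSpace.volume_ball_fin_three]
    simp
    positivity
  have hF : 𝓕 (auxG 3 (auxSq χ)) ((2 * Real.pi)⁻¹ * t)
      = ∫ y in Set.Ioi (0 : ℝ), y ^ 2 •
        ((((χ y) ^ 2 * y : ℝ) : ℂ) * Complex.exp (-(t * y) * Complex.I)) := by
    rw [Real.fourier_eq', ← integral_indicator measurableSet_Ioi]
    congr 1
    ext y
    rcases le_or_gt y 0 with hy | hy
    · rw [Set.indicator_of_notMem (by simpa using hy)]
      simp [auxG, max_eq_right hy]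
    · rw [Set.indicator_of_mem (by simpa using hy)]
      have : ((-2 * Real.pi * inner ℝ y ((2 * Real.pi)⁻¹ * t) : ℝ) : ℂ) * I
          = -(t * y) * Complex.I := by
        have : (-2 * Real.pi * inner ℝ y ((2 * Real.pi)⁻¹ * t) : ℝ) = -(t * y) := by
          simp
          field_simp
        rw [this]; push_cast; ring
      rw [this]
      simp only [auxG, auxSq_apply, max_eq_left hy.le, smul_eq_mul, Complex.real_smul]
      push_cast
      ring
  unfold u
  rw [h, hF, hv]
  simp only [finrank_euclideanSpace, Fintype.card_fin, Nat.add_one_sub_one, nsmul_eq_mul,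
    Complex.real_smul]
  have hp : (Real.pi : ℂ) ≠ 0 := by exact_mod_cast Real.pi_ne_zero
  rw [← mul_assoc, ← mul_assoc]
  congr 1
  push_cast
  field_simp
  norm_num

lemma aux_integrand (χ : SchwartzMap ℝ ℝ) (β t : ℝ) :
    u χ t * Complex.exp (2 * (1 : ℤ) * β * t * Complex.I)
      = ((1 / (3 * Real.pi ^ 2) : ℝ) : ℂ) *
        (fun w : ℝ => Complex.exp (((2 * Real.pi * inner ℝ w (2 * β) : ℝ) : ℂ) * I) •
          𝓕 (auxG 3 (auxSq χ)) w) ((2 * Real.pi)⁻¹ * t) := by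
  rw [u_eq]
  have : (2 * Real.pi * inner ℝ ((2 * Real.pi)⁻¹ * t) (2 * β) : ℝ) = 2 * β * t := by
    simp
    field_simp
  simp only [this, smul_eq_mul]
  push_cast
  ring_nf

lemma aux_full (χ : SchwartzMap ℝ ℝ) (β : ℝ) (hβ : 0 < β) :
    Integrable (fun t : ℝ => u χ t * Complex.exp (2 * (1 : ℤ) * β * t * Complex.I)) ∧
    ∫ t : ℝ, u χ t * Complex.exp (2 * (1 : ℤ) * β * t * Complex.I)
      = (((16 / (3 * Real.pi)) * β ^ 3 * (χ (2 * β)) ^ 2 : ℝ) : ℂ) := by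
  simp_rw [aux_integrand]
  have hi := auxG_fourier_int (auxSq χ)
  have hp : (2 * Real.pi)⁻¹ ≠ 0 := by positivity
  constructor
  · refine Integrable.const_mul ?_ _
    refine Integrable.comp_mul_left' (g := fun w : ℝ =>
      Complex.exp (((2 * Real.pi * inner ℝ w (2 * β) : ℝ) : ℂ) * I) •
          𝓕 (auxG 3 (auxSq χ)) w) ?_ hp
    refine hi.norm.mono' ?_ ?_
    · have hc : Continuous (fun w : ℝ =>
          Complex.exp (((2 * Real.pi * inner ℝ w (2 * β) : ℝ) : ℂ) * I)) := by fun_prop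
      exact hc.aestronglyMeasurable.smul hi.aestronglyMeasurable
    · refine Filter.Eventually.of_forall fun w => ?_
      rw [norm_smul, Complex.norm_exp_ofReal_mul_I, one_mul]
  · rw [integral_const_mul, Measure.integral_comp_mul_left (fun w : ℝ =>
      Complex.exp (((2 * Real.pi * inner ℝ w (2 * β) : ℝ) : ℂ) * I) •
          𝓕 (auxG 3 (auxSq χ)) w), ← Real.fourierInv_eq',
      (auxG_cont 3 _).fourierInv_fourier_eq (auxG_int 3 _) hi]
    have h2 : (0 : ℝ) ≤ 2 * β := by positivity
    simp only [auxG, auxSq_apply, max_eq_left h2, Complex.real_smul]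
    rw [inv_inv, abs_of_pos (by positivity)]
    norm_cast
    field_simp
    ring

lemma aux_conj (χ : SchwartzMap ℝ ℝ) (β t : ℝ) :
    u χ (-t) * Complex.exp (2 * (1 : ℤ) * β * (-t : ℝ) * Complex.I)
      = (starRingEnd ℂ) (u χ t * Complex.exp (2 * (1 : ℤ) * β * t * Complex.I)) := by
  rw [map_mul]
  congr 1
  · unfold u
    rw [map_mul, ← integral_conj, Complex.conj_ofReal]
    congr 2
    ext k
    rw [map_mul, Complex.conj_ofReal, ← Complex.exp_conj]
    simp
  · rw [← Complex.exp_conj]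
    simp [Complex.conj_ofNat]

lemma aux_re (χ : SchwartzMap ℝ ℝ) (β : ℝ) (hβ : 0 < β) :
    (dcoef χ β 1).re = (8 / (3 * Real.pi)) * β ^ 3 * (χ (2 * β)) ^ 2 := by
  obtain ⟨hi, hv⟩ := aux_full χ β hβ
  have h1 := intervalIntegral.integral_Iic_add_Ioi (b := 0) hi.integrableOn hi.integrableOn
  have h2 := integral_comp_neg_Ioi (0 : ℝ)
    (fun t : ℝ => u χ t * Complex.exp (2 * (1 : ℤ) * β * t * Complex.I))
  simp only [aux_conj, neg_zero] at h2
  rw [integral_conj] at h2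
  rw [← h2, hv] at h1
  have h3 := congrArg Complex.re h1
  rw [Complex.add_re, Complex.conj_re, Complex.ofReal_re] at h3
  unfold dcoef
  linear_combination h3 / 2

theorem stmt6 (χ : SchwartzMap ℝ ℝ) (β : ℝ) (hβ : 0 < β) :
    (dcoef χ β 1).re = (8 / (3 * Real.pi)) * β ^ 3 * (χ (2 * β)) ^ 2 ∧
      0 ≤ (dcoef χ β 1).re ∧
      (χ (2 * β) ≠ 0 → 0 < (dcoef χ β 1).re) := by
  rw [aux_re χ β hβ]
  refine ⟨rfl, by positivity, fun h => by positivity⟩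
end
end

section
/- Let β > 0. Then Re d₀ = 0 and Re d₋₁ = 0. -/
noncomputable section
open MeasureTheory Complex

def ff (χ : SchwartzMap ℝ ℝ) (r : ℝ) : ℂ := ((max r 0 ^ 3 * (χ r) ^ 2 : ℝ) : ℂ)

lemma ff_cont (χ : SchwartzMap ℝ ℝ) : Continuous (ff χ) := by
  unfold ff
  have := χ.continuous
  fun_prop

lemma ff_int (χ : SchwartzMap ℝ ℝ) : Integrable (ff χ) := by
  have h := χ.integrable_pow_mul volume 3
  obtain ⟨C, hC⟩ := χ.decay 0 0
  have hC' : ∀ x, |χ x| ≤ C := by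
    intro x
    have := hC.2 x
    simpa using this
  refine (h.const_mul C).mono' (ff_cont χ).aestronglyMeasurable (Filter.Eventually.of_forall fun r => ?_)
  simp only [ff, Complex.norm_real, Real.norm_eq_abs, abs_mul, abs_pow, pow_two (|χ r|)]
  have h1 : |max r 0| ≤ |r| := by
    rcases le_total r 0 with h | h <;> simp [h]
  have h2 : |max r 0| ^ 3 ≤ |r| ^ 3 := by gcongr
  calc |max r 0| ^ 3 * (|χ r| * |χ r|) ≤ |r| ^ 3 * (C * |χ r|) := by
        gcongr
        exact hC' r
    _ = _ := by ring

lemma u_eq_s7 (χ : SchwartzMap ℝ ℝ) : ∃ c : ℝ, c ≠ 0 ∧ ∀ w : ℝ,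
    u χ (2 * Real.pi * w) = c * FourierTransform.fourier (ff χ) w := by
  refine ⟨(2 / (3 * (2 * Real.pi) ^ 3)) * (3 * volume.real (Metric.ball (0 : EuclideanSpace ℝ (Fin 3)) 1)), ?_, ?_⟩
  · have : 0 < volume.real (Metric.ball (0 : EuclideanSpace ℝ (Fin 3)) 1) :=
      ENNReal.toReal_pos (Metric.measure_ball_pos _ _ one_pos).ne' measure_ball_lt_top.ne
    positivity
  intro w
  have key := integral_fun_norm_addHaar (volume : Measure (EuclideanSpace ℝ (Fin 3)))
    (fun r : ℝ => (((χ r) ^ 2 * r : ℝ) : ℂ) * Complex.exp (-(((2 * Real.pi * w : ℝ) : ℂ) * r) * Complex.I))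
  unfold u
  rw [key, Real.fourier_real_eq_integral_exp_smul]
  rw [← setIntegral_eq_integral_of_forall_compl_eq_zero (s := Set.Ioi (0 : ℝ))
    (f := fun v : ℝ => Complex.exp (↑(-2 * Real.pi * v * w) * Complex.I) • ff χ v)]
  · have : ∀ y ∈ Set.Ioi (0 : ℝ), y ^ (Module.finrank ℝ (EuclideanSpace ℝ (Fin 3)) - 1) •
        ((((χ y) ^ 2 * y : ℝ) : ℂ) * Complex.exp (-(((2 * Real.pi * w : ℝ) : ℂ) * y) * Complex.I))
        = Complex.exp (↑(-2 * Real.pi * y * w) * Complex.I) • ff χ y := by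
      intro y hy
      have hy : 0 < y := hy
      simp only [finrank_euclideanSpace, Fintype.card_fin, ff, max_eq_left hy.le, Complex.real_smul,
        smul_eq_mul]
      have : (-(((2 * Real.pi * w : ℝ) : ℂ) * y) * Complex.I) = ↑(-2 * Real.pi * y * w) * Complex.I := by
        push_cast; ring
      rw [this]
      push_cast
      ring
    rw [setIntegral_congr_fun measurableSet_Ioi this]
    simp only [finrank_euclideanSpace, Fintype.card_fin, nsmul_eq_mul, Complex.real_smul]
    push_cast
    ring
  · intro y hy
    have : y ≤ 0 := not_lt.mp hy
    simp [ff, this]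

lemma u_neg (χ : SchwartzMap ℝ ℝ) (t : ℝ) : u χ (-t) = (starRingEnd ℂ) (u χ t) := by
  unfold u
  rw [map_mul, Complex.conj_ofReal, ← integral_conj]
  congr 2
  ext k
  rw [map_mul, Complex.conj_ofReal, ← Complex.exp_conj]
  simp

lemma re_integral_zero (χ : SchwartzMap ℝ ℝ) (b : ℝ) (hb : 0 ≤ b) :
    (∫ t in Set.Ioi (0 : ℝ), u χ t * Complex.exp (-(b * t : ℝ) * Complex.I)).re = 0 := by
  set g : ℝ → ℂ := fun t => u χ t * Complex.exp (-(b * t : ℝ) * Complex.I) with hg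
  have gneg : ∀ t, g (-t) = (starRingEnd ℂ) (g t) := by
    intro t
    simp only [hg, u_neg, map_mul, ← Complex.exp_conj]
    simp
  by_cases hi : IntegrableOn g (Set.Ioi 0)
  swap
  · change (∫ t in Set.Ioi (0 : ℝ), g t).re = 0
    rw [integral_undef hi]; rfl
  have hi2 : IntegrableOn g (Set.Iic 0) := by
    rw [integrableOn_Iic_iff_integrableOn_Iio]
    have h1 : IntegrableOn (fun t => g (-t)) (Set.Ioi 0) := by
      simp only [gneg]
      exact (Complex.conjLIE.integrable_comp_iff (μ := volume.restrict (Set.Ioi 0))).2 hi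
    have := ((Measure.measurePreserving_neg (volume : Measure ℝ)).integrableOn_comp_preimage
      (Homeomorph.neg ℝ).measurableEmbedding (f := g) (s := Set.Iio 0)).1
    apply this
    simpa [Function.comp_def] using h1
  have hI : Integrable g := by
    have := hi2.union hi
    rwa [Set.Iic_union_Ioi, integrableOn_univ] at this
  have hsum : (∫ t, g t) = (2 * (∫ t in Set.Ioi (0:ℝ), g t).re : ℝ) := by
    rw [← intervalIntegral.integral_Iic_add_Ioi hi2 hi]
    have h3 : ∫ t in Set.Iic (0:ℝ), g t = (starRingEnd ℂ) (∫ t in Set.Ioi (0:ℝ), g t) := by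
      rw [← integral_conj]
      have := integral_comp_neg_Ioi (0:ℝ) g
      rw [neg_zero] at this
      rw [← this]
      simp only [gneg]
    rw [h3, add_comm, Complex.add_conj]
  obtain ⟨c, hc, hu⟩ := u_eq_s7 χ
  have hpi : (2 * Real.pi) ≠ 0 := by positivity
  have hgw : ∀ w : ℝ, g (2 * Real.pi * w) = c * (Complex.exp (↑(2 * Real.pi * w * (-b)) * Complex.I) • FourierTransform.fourier (ff χ) w) := by
    intro w
    simp only [hg, hu, smul_eq_mul]
    have : -((b * (2 * Real.pi * w) : ℝ) : ℂ) * Complex.I = ↑(2 * Real.pi * w * (-b)) * Complex.I := by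
      push_cast; ring
    rw [this]; ring
  have hF : Integrable (FourierTransform.fourier (ff χ)) := by
    have h1 : Integrable (fun w => g (2 * Real.pi * w)) := hI.comp_mul_left' hpi
    have h2 := h1.bdd_mul (c := 1) (f := fun w : ℝ => Complex.exp (↑(2 * Real.pi * w * b) * Complex.I))
      (by apply Continuous.aestronglyMeasurable; fun_prop)
      (Filter.Eventually.of_forall fun w => (Complex.norm_exp_ofReal_mul_I _).le)
    have h3 := h2.const_mul (c : ℂ)⁻¹
    refine h3.congr (Filter.Eventually.of_forall fun w => ?_)
    simp only [hgw, smul_eq_mul]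
    have hc' : (c : ℂ) ≠ 0 := by exact_mod_cast hc
    have : Complex.exp (↑(2 * Real.pi * w * b) * Complex.I) * Complex.exp (↑(2 * Real.pi * w * (-b)) * Complex.I) = 1 := by
      rw [← Complex.exp_add, ← Complex.exp_zero]
      congr 1
      push_cast; ring
    have h5 : (c : ℂ)⁻¹ * c = 1 := inv_mul_cancel₀ hc'
    linear_combination (FourierTransform.fourier (ff χ) w) * this + (Complex.exp (↑(2 * Real.pi * w * b) * Complex.I) * Complex.exp (↑(2 * Real.pi * w * (-b)) * Complex.I) * FourierTransform.fourier (ff χ) w) * h5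
  have inv := (ff_int χ).fourierInv_fourier_eq hF (v := -b) (ff_cont χ).continuousAt
  rw [Real.fourierInv_eq'] at inv
  have hz : (∫ t, g t) = 0 := by
    have h1 := Measure.integral_comp_mul_left g (2 * Real.pi)
    have h2 : ∫ w, g (2 * Real.pi * w) = 0 := by
      simp only [hgw]
      rw [integral_const_mul]
      have : ff χ (-b) = 0 := by simp [ff, hb]
      rw [this] at inv
      have e : ∀ w : ℝ, 2 * Real.pi * w * (-b) = 2 * Real.pi * inner ℝ w (-b) := by
        intro w; simp; ring
      simp only [e]
      rw [inv, mul_zero]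
    rw [h2] at h1
    have := h1.symm
    rw [smul_eq_zero] at this
    rcases this with h | h
    · exfalso
      have : 0 < |(2 * Real.pi)⁻¹| := by positivity
      exact this.ne' h
    · exact h
  rw [hsum] at hz
  have : 2 * (∫ t in Set.Ioi (0:ℝ), g t).re = 0 := by exact_mod_cast hz
  linarith

theorem stmt7 (χ : SchwartzMap ℝ ℝ) (β : ℝ) (hβ : 0 < β) :
    (dcoef χ β 0).re = 0 ∧ (dcoef χ β (-1)).re = 0 := by
  constructor
  · have := re_integral_zero χ 0 le_rfl
    unfold dcoef
    simpa using this
  · have := re_integral_zero χ (2 * β) (by positivity)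
    unfold dcoef
    convert this using 6
    push_cast
    ring_nf
end
end

section
/- Let d₁, d₀, d₋₁ be complex numbers with Re d₀ = 0 and Re d₋₁ = 0, and let L be the GKLS operator built from them. Then L(σ(−1)) = (−Re d₁ − i(Im d₁ − Im d₋₁)) σ(−1). -/
noncomputable section
open Complex

def σ1 : Matrix (Fin 2) (Fin 2) ℂ := !![0, 1; 1, 0]
def σ2 : Matrix (Fin 2) (Fin 2) ℂ := !![0, -Complex.I; Complex.I, 0]
def σ3 : Matrix (Fin 2) (Fin 2) ℂ := !![1, 0; 0, -1]

/-- `σ(m)` for `m ∈ {1, 0, -1}`. -/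
def pσ (m : ℤ) : Matrix (Fin 2) (Fin 2) ℂ :=
  if m = 1 then ((Real.sqrt 2 : ℂ))⁻¹ • (σ1 + Complex.I • σ2)
  else if m = 0 then σ3
  else ((Real.sqrt 2 : ℂ))⁻¹ • (σ1 - Complex.I • σ2)

/-- `H_L = Σ_m (Im d_m) σ(m)σ(−m)`. -/
def HL (d1 d0 dm1 : ℂ) : Matrix (Fin 2) (Fin 2) ℂ :=
  (d1.im : ℂ) • (pσ 1 * pσ (-1)) + (d0.im : ℂ) • (pσ 0 * pσ 0) +
    (dm1.im : ℂ) • (pσ (-1) * pσ 1)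

/-- The GKLS operator built from `d₁, d₀, d₋₁`. -/
def Lop (d1 d0 dm1 : ℂ) (A : Matrix (Fin 2) (Fin 2) ℂ) : Matrix (Fin 2) (Fin 2) ℂ :=
  (d1.re : ℂ) • (pσ 1 * A * pσ (-1) -
      (2 : ℂ)⁻¹ • (A * (pσ 1 * pσ (-1)) + (pσ 1 * pσ (-1)) * A)) +
    (d0.re : ℂ) • (pσ 0 * A * pσ 0 -
      (2 : ℂ)⁻¹ • (A * (pσ 0 * pσ 0) + (pσ 0 * pσ 0) * A)) +
    (dm1.re : ℂ) • (pσ (-1) * A * pσ 1 -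
      (2 : ℂ)⁻¹ • (A * (pσ (-1) * pσ 1) + (pσ (-1) * pσ 1) * A)) -
    (Complex.I / 2) • (A * HL d1 d0 dm1 - HL d1 d0 dm1 * A)

theorem pσ_one_eq : pσ 1 = !![0, (Real.sqrt 2 : ℂ); 0, 0] := by
  have hs : (Real.sqrt 2 : ℂ) * (Real.sqrt 2 : ℂ) = 2 := by
    rw [← Complex.ofReal_mul, Real.mul_self_sqrt (by norm_num)]; norm_num
  have hn : (Real.sqrt 2 : ℂ) ≠ 0 := by
    intro h; rw [h] at hs; norm_num at hs
  ext i j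
  fin_cases i <;> fin_cases j <;> simp [pσ, σ1, σ2]
  field_simp
  linear_combination -hs

theorem pσ_neg_one_eq : pσ (-1) = !![0, 0; (Real.sqrt 2 : ℂ), 0] := by
  have hs : (Real.sqrt 2 : ℂ) * (Real.sqrt 2 : ℂ) = 2 := by
    rw [← Complex.ofReal_mul, Real.mul_self_sqrt (by norm_num)]; norm_num
  have hn : (Real.sqrt 2 : ℂ) ≠ 0 := by
    intro h; rw [h] at hs; norm_num at hs
  ext i j
  fin_cases i <;> fin_cases j <;> simp [pσ, σ1, σ2]
  field_simp
  linear_combination -hs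

theorem pσ_zero_eq : pσ 0 = !![1, 0; 0, -1] := by
  simp [pσ, σ3]

theorem stmt10 (d1 d0 dm1 : ℂ) (h0 : d0.re = 0) (hm1 : dm1.re = 0) :
    Lop d1 d0 dm1 (pσ (-1)) =
      (-(d1.re : ℂ) - Complex.I * ((d1.im : ℂ) - (dm1.im : ℂ))) • pσ (-1) := by
  have hs : (Real.sqrt 2 : ℂ) * (Real.sqrt 2 : ℂ) = 2 := by
    rw [← Complex.ofReal_mul, Real.mul_self_sqrt (by norm_num)]; norm_num
  simp only [Lop, HL, h0, hm1, pσ_one_eq, pσ_neg_one_eq, pσ_zero_eq]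
  ext i j
  fin_cases i <;> fin_cases j <;> simp [Matrix.mul_apply, Fin.sum_univ_two, hs]
  ring
end
end
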